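/- Let m≥1 and let M be a complex symmetric m×m matrix whose real part is positive definite; then Z:=∫_{ℝ^m}e^{−(1/2)xᵀMx}dx converges absolutely, Z≠0, and M is invertible. For F:ℝ^m→ℂ with ∫_{ℝ^m}|F(x)|·e^{−(1/2)Re(xᵀMx)}dx<∞ define ⟨F⟩=Z^{−1}∫_{ℝ^m}F(x)e^{−(1/2)xᵀMx}dx. Then ⟨x_i x_j⟩=(M^{−1})_{ij} for all i,j, and for every C¹ function f:ℝ^m→ℂ such that f and all its first-order partial derivatives grow at most polynomially, one has, for every i, the Gaussian integration-by-parts (Wick) identity ⟨x_i·f⟩ = ∑_{j=1}^{m}(M^{−1})_{ij}·⟨∂f/∂x_j⟩. -/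

import Mathlib

open MeasureTheory

/-- The quadratic form `xᵀMx = ∑_{i,j} M_{ij} x_i x_j` for real `x` and complex `M`. -/
noncomputable def quadForm (m : ℕ) (M : Matrix (Fin m) (Fin m) ℂ) (x : Fin m → ℝ) : ℂ :=
  ∑ i, ∑ j, M i j * (x i : ℂ) * (x j : ℂ)

/-!
Since `Re M` dominates a multiple of `‖x‖²`, every function of polynomial growth is integrable
against the weight `w(x) = e^{-(1/2) xᵀMx}`. A real congruence carries `Re M` to the identity and
`Im M` to a diagonal matrix, so `Z` is, up to a Jacobian, a product of one-dimensional Gaussian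
integrals and does not vanish. Integrating by parts against `∂_j w = -(Mx)_j w` gives
`∑ k, M j k ⟨x_k f⟩ = ⟨∂_j f⟩`. For `f = x_i` this says that `M` times the covariance matrix is `1`,
so `M` is invertible with inverse the covariance matrix; applying `M⁻¹` then gives the identity
for general `f`.
-/

/-- The functions of at most polynomial growth on a normed space. The base is `1 + ‖x‖` rather
than `‖x‖` so that the bound also allows arbitrary values near the origin. -/
def HasPolynomialGrowth {V E : Type*} [NormedAddCommGroup V] [NormedAddCommGroup E]
    (g : V → E) : Prop :=
  ∃ C : ℝ, ∃ k : ℕ, ∀ x, ‖g x‖ ≤ C * (1 + ‖x‖) ^ k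

namespace HasPolynomialGrowth

variable {V E : Type*} [NormedAddCommGroup V] [NormedAddCommGroup E]

theorem const (a : E) : HasPolynomialGrowth fun _ : V => a :=
  ⟨‖a‖, 0, fun _ => by simp⟩

theorem clm_apply {V' : Type*} [NormedAddCommGroup V'] [NormedSpace ℝ V'] [NormedSpace ℝ E]
    {L : V → V' →L[ℝ] E} (hL : HasPolynomialGrowth L) (v : V') :
    HasPolynomialGrowth fun x => L x v := by
  obtain ⟨C, k, hC⟩ := hL
  refine ⟨C * ‖v‖, k, fun x => ?_⟩
  calc ‖L x v‖ ≤ ‖L x‖ * ‖v‖ := (L x).le_opNorm v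
    _ ≤ C * (1 + ‖x‖) ^ k * ‖v‖ := by gcongr; exact hC x
    _ = C * ‖v‖ * (1 + ‖x‖) ^ k := by ring

theorem coord_smul {ι : Type*} [Fintype ι] [NormedSpace ℂ E] {g : (ι → ℝ) → E}
    (hg : HasPolynomialGrowth g) (i : ι) : HasPolynomialGrowth fun x => (x i : ℂ) • g x := by
  obtain ⟨C, k, hC⟩ := hg
  refine ⟨C, k + 1, fun x => ?_⟩
  calc ‖(x i : ℂ) • g x‖ = ‖x i‖ * ‖g x‖ := by rw [norm_smul, Complex.norm_real]
    _ ≤ (1 + ‖x‖) * (C * (1 + ‖x‖) ^ k) :=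
      mul_le_mul ((norm_le_pi_norm x i).trans (by linarith)) (hC x) (norm_nonneg _) (by positivity)
    _ = C * (1 + ‖x‖) ^ (k + 1) := by ring

end HasPolynomialGrowth

theorem one_add_pow_mul_exp_neg_mul_sq_le {c r : ℝ} (hc : 0 < c) (hr : 0 ≤ r) (n : ℕ) :
    (1 + r) ^ n * Real.exp (-c * r ^ 2) ≤ n.factorial * Real.exp (1 + 1 / (4 * c)) := by
  have hpow : (1 + r) ^ n ≤ n.factorial * Real.exp (1 + r) := by
    have := Real.pow_div_factorial_le_exp (x := 1 + r) (by positivity) n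
    rwa [div_le_iff₀' (by positivity)] at this
  have hsq : 1 + r + -c * r ^ 2 = 1 + 1 / (4 * c) - c * (r - 1 / (2 * c)) ^ 2 := by
    field_simp
    ring
  calc (1 + r) ^ n * Real.exp (-c * r ^ 2)
      ≤ n.factorial * Real.exp (1 + r) * Real.exp (-c * r ^ 2) := by gcongr
    _ = n.factorial * Real.exp (1 + r + -c * r ^ 2) := by rw [mul_assoc, ← Real.exp_add]
    _ ≤ n.factorial * Real.exp (1 + 1 / (4 * c)) := by
      rw [hsq]
      gcongr
      exact sub_le_self _ (by positivity)

theorem integrable_one_add_norm_pow_mul_exp_neg_mul_sq {V : Type*} [NormedAddCommGroup V]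
    [NormedSpace ℝ V] [FiniteDimensional ℝ V] [MeasurableSpace V] [BorelSpace V]
    (μ : Measure V) [μ.IsAddHaarMeasure] {c : ℝ} (hc : 0 < c) (k : ℕ) :
    Integrable (fun x => (1 + ‖x‖) ^ k * Real.exp (-c * ‖x‖ ^ 2)) μ := by
  set d := Module.finrank ℝ V
  have hdecay : Integrable (fun x : V => (1 + ‖x‖) ^ (-((d + 1 : ℕ) : ℝ))) μ :=
    integrable_one_add_norm (by push_cast; linarith)
  refine (hdecay.const_mul ((k + (d + 1)).factorial * Real.exp (1 + 1 / (4 * c)))).mono'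
    (by fun_prop) (ae_of_all _ fun x => ?_)
  have hbound := one_add_pow_mul_exp_neg_mul_sq_le hc (norm_nonneg x) (k + (d + 1))
  rw [Real.norm_of_nonneg (by positivity), Real.rpow_neg (by positivity), Real.rpow_natCast,
    ← div_eq_mul_inv, le_div_iff₀ (by positivity)]
  calc _ = (1 + ‖x‖) ^ (k + (d + 1)) * Real.exp (-c * ‖x‖ ^ 2) := by ring
    _ ≤ _ := hbound

section Matrix

open Matrix
open scoped ComplexOrder

variable {ι 𝕜 : Type*} [Fintype ι] [RCLike 𝕜]

theorem exists_pos_mul_norm_sq_le_re_dotProduct_mulVec {A : Matrix ι ι 𝕜} (hA : A.PosDef) :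
    ∃ c : ℝ, 0 < c ∧ ∀ x, c * ‖x‖ ^ 2 ≤ RCLike.re (star x ⬝ᵥ A *ᵥ x) := by
  obtain ⟨c, hc, hle⟩ := (isCompact_sphere (0 : ι → 𝕜) 1).exists_forall_le'
    (f := fun x => RCLike.re (star x ⬝ᵥ A *ᵥ x)) (a := 0)
    (by fun_prop) fun x hx => hA.re_dotProduct_pos (ne_zero_of_mem_unit_sphere ⟨x, hx⟩)
  refine ⟨c, hc, fun x => ?_⟩
  rcases eq_or_ne x 0 with rfl | hx
  · simp
  have hx' : 0 < ‖x‖ := norm_pos_iff.2 hx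
  have hunit : c ≤ RCLike.re (star (‖x‖⁻¹ • x) ⬝ᵥ A *ᵥ (‖x‖⁻¹ • x)) :=
    hle _ (by simp [norm_smul, hx'.ne'])
  rw [star_smul, smul_dotProduct, mulVec_smul, dotProduct_smul, RCLike.smul_re, RCLike.smul_re,
    star_trivial, ← mul_assoc, ← mul_inv, ← sq, le_inv_mul_iff₀ (by positivity)] at hunit
  rwa [mul_comm]

variable [DecidableEq ι]

theorem exists_isUnit_conjTranspose_mul_mul_eq_one {A : Matrix ι ι 𝕜} (hA : A.PosDef) :
    ∃ Q : Matrix ι ι 𝕜, IsUnit Q ∧ Qᴴ * A * Q = 1 := by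
  open scoped MatrixOrder in
  obtain ⟨X, hX, rfl⟩ :=
    CStarAlgebra.isStrictlyPositive_iff_eq_star_mul_self.mp hA.isStrictlyPositive
  have hX' : X * X⁻¹ = 1 := mul_nonsing_inv X ((isUnit_iff_isUnit_det X).1 hX)
  refine ⟨X⁻¹, isUnit_nonsing_inv_iff.2 hX, ?_⟩
  rw [star_eq_conjTranspose, mul_assoc, mul_assoc, hX', mul_one, ← conjTranspose_mul, hX',
    conjTranspose_one]

theorem exists_isUnit_conjTranspose_mul_mul_eq_one_and_eq_diagonal {A B : Matrix ι ι 𝕜}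
    (hA : A.PosDef) (hB : B.IsHermitian) :
    ∃ (P : Matrix ι ι 𝕜) (d : ι → ℝ), IsUnit P ∧ Pᴴ * A * P = 1 ∧
      Pᴴ * B * P = diagonal fun i => (d i : 𝕜) := by
  obtain ⟨Q, hQ, hQA⟩ := exists_isUnit_conjTranspose_mul_mul_eq_one hA
  have hH : (Qᴴ * B * Q).IsHermitian := isHermitian_conjTranspose_mul_mul Q hB
  set U := hH.eigenvectorUnitary
  have hUU : (U : Matrix ι ι 𝕜)ᴴ * U = 1 := Unitary.coe_star_mul_self U
  have hU : (U : Matrix ι ι 𝕜)ᴴ * (Qᴴ * B * Q) * U = diagonal fun i => (hH.eigenvalues i : 𝕜) := by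
    have := hH.conjStarAlgAut_star_eigenvectorUnitary
    rwa [Unitary.conjStarAlgAut_star_apply] at this
  refine ⟨Q * U, hH.eigenvalues, hQ.mul (Unitary.isUnit_coe), ?_, ?_⟩
  · calc (Q * (U : Matrix ι ι 𝕜))ᴴ * A * (Q * U) = (U : Matrix ι ι 𝕜)ᴴ * (Qᴴ * A * Q) * U := by
          simp only [conjTranspose_mul, mul_assoc]
      _ = 1 := by rw [hQA, mul_one, hUU]
  · rw [← hU]
    simp only [conjTranspose_mul, mul_assoc]

end Matrix

section Weight

open Matrix

variable {ι : Type*} [Fintype ι]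

/-- The density `e^{-(1/2) xᵀMx}` of the unnormalized complex Gaussian measure on `ℝ^ι` with
precision matrix `M`. -/
noncomputable def gaussianWeight (M : Matrix ι ι ℂ) (x : ι → ℝ) : ℂ :=
  Complex.exp (-(1 / 2) * (Complex.ofReal ∘ x ⬝ᵥ M *ᵥ (Complex.ofReal ∘ x)))

theorem continuous_gaussianWeight (M : Matrix ι ι ℂ) : Continuous (gaussianWeight M) := by
  unfold gaussianWeight
  fun_prop

theorem norm_gaussianWeight (M : Matrix ι ι ℂ) (x : ι → ℝ) :
    ‖gaussianWeight M x‖ = Real.exp (-(1 / 2) * (x ⬝ᵥ M.map Complex.re *ᵥ x)) := by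
  rw [gaussianWeight, Complex.norm_exp]
  congr 1
  simp [dotProduct, mulVec]

theorem HasPolynomialGrowth.integrable_gaussianWeight_smul {E : Type*} [NormedAddCommGroup E]
    [NormedSpace ℂ E] {M : Matrix ι ι ℂ} (hM : (M.map Complex.re).PosDef) {g : (ι → ℝ) → E}
    (hg : HasPolynomialGrowth g) (hgm : AEStronglyMeasurable g) :
    Integrable fun x => gaussianWeight M x • g x := by
  obtain ⟨c, hc, hcoercive⟩ := exists_pos_mul_norm_sq_le_re_dotProduct_mulVec hM
  obtain ⟨C, k, hC⟩ := hg
  have hdecay (x : ι → ℝ) : ‖gaussianWeight M x‖ ≤ Real.exp (-(c / 2) * ‖x‖ ^ 2) := by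
    rw [norm_gaussianWeight]
    have := hcoercive x
    rw [star_trivial, RCLike.re_to_real] at this
    exact Real.exp_le_exp.2 (by linarith)
  refine ((integrable_one_add_norm_pow_mul_exp_neg_mul_sq volume (half_pos hc) k).const_mul
    C).mono' ((continuous_gaussianWeight M).aestronglyMeasurable.smul hgm)
    (ae_of_all _ fun x => ?_)
  calc ‖gaussianWeight M x • g x‖
      ≤ Real.exp (-(c / 2) * ‖x‖ ^ 2) * (C * (1 + ‖x‖) ^ k) := by
        rw [norm_smul]
        exact mul_le_mul (hdecay x) (hC x) (norm_nonneg _) (by positivity)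
    _ = C * ((1 + ‖x‖) ^ k * Real.exp (-(c / 2) * ‖x‖ ^ 2)) := by ring

theorem gaussianWeight_mulVec (M : Matrix ι ι ℂ) (P : Matrix ι ι ℝ) (y : ι → ℝ) :
    gaussianWeight M (P *ᵥ y) =
      gaussianWeight ((P.map Complex.ofReal)ᵀ * M * P.map Complex.ofReal) y := by
  have hP : Complex.ofReal ∘ (P *ᵥ y) = P.map Complex.ofReal *ᵥ (Complex.ofReal ∘ y) :=
    funext fun i => Complex.ofRealHom.map_mulVec P y i
  rw [gaussianWeight, gaussianWeight, hP, ← mulVec_mulVec, ← mulVec_mulVec,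
    dotProduct_mulVec (Complex.ofReal ∘ y), vecMul_transpose]

theorem exists_isUnit_transpose_mul_mul_eq_diagonal [DecidableEq ι] {M : Matrix ι ι ℂ}
    (hsymm : M.IsSymm) (hM : (M.map Complex.re).PosDef) :
    ∃ (P : Matrix ι ι ℝ) (d : ι → ℝ), IsUnit P ∧
      (P.map Complex.ofReal)ᵀ * M * P.map Complex.ofReal =
        diagonal fun i => 1 + d i * Complex.I := by
  have him : (M.map Complex.im).IsHermitian := isHermitian_iff_isSymm.2 (hsymm.map _)
  obtain ⟨P, d, hP, hre, him⟩ := exists_isUnit_conjTranspose_mul_mul_eq_one_and_eq_diagonal hM him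
  rw [conjTranspose_eq_transpose_of_trivial] at hre him
  have hsplit : M = (M.map Complex.re).map Complex.ofRealHom +
      Complex.I • (M.map Complex.im).map Complex.ofRealHom := by
    ext i j
    simpa [mul_comm] using (Complex.re_add_im (M i j)).symm
  refine ⟨P, d, hP, ?_⟩
  calc (P.map Complex.ofReal)ᵀ * M * P.map Complex.ofReal
      = (Pᵀ * M.map Complex.re * P).map Complex.ofRealHom +
          Complex.I • (Pᵀ * M.map Complex.im * P).map Complex.ofRealHom := by
        conv_lhs => rw [hsplit]
        simp only [Matrix.map_mul, mul_add, add_mul, Matrix.mul_smul, Matrix.smul_mul,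
          transpose_map]
        rfl
    _ = diagonal fun i => 1 + d i * Complex.I := by
        rw [hre, him]
        ext i j
        by_cases h : i = j <;> simp [h, mul_comm]

theorem integral_gaussianWeight_diagonal [DecidableEq ι] {b : ι → ℂ} (hb : ∀ i, 0 < (b i).re) :
    ∫ x, gaussianWeight (diagonal b) x = ∏ i, (2 * Real.pi / b i) ^ (1 / 2 : ℂ) := by
  have hsum (x : ι → ℝ) : gaussianWeight (diagonal b) x =
      Complex.exp (-∑ i, b i / 2 * (x i : ℂ) ^ 2 + ∑ i, 0 * (x i : ℂ)) := by
    rw [gaussianWeight]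
    congr 1
    simp only [dotProduct, mulVec_diagonal, Function.comp_apply, zero_mul, Finset.sum_const_zero,
      add_zero, Finset.mul_sum, ← Finset.sum_neg_distrib]
    exact Finset.sum_congr rfl fun i _ => by ring
  simp only [hsum]
  rw [GaussianFourier.integral_cexp_neg_sum_mul_add (fun i => by simpa using hb i) fun _ => 0]
  refine Finset.prod_congr rfl fun i _ => ?_
  rw [zero_pow two_ne_zero, zero_div, Complex.exp_zero, mul_one, div_div_eq_mul_div, mul_comm]

theorem integral_comp_mulVec [DecidableEq ι] {E : Type*} [NormedAddCommGroup E] [NormedSpace ℝ E]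
    {P : Matrix ι ι ℝ} (hP : IsUnit P) (g : (ι → ℝ) → E) :
    ∫ x, g (P *ᵥ x) = |P.det⁻¹| • ∫ x, g x := by
  have hemb : MeasurableEmbedding (toLin' P) :=
    (LinearMap.isClosedEmbedding_of_injective
      (LinearMap.ker_eq_bot.2 (mulVec_injective_iff_isUnit.2 hP))).measurableEmbedding
  have hmap := Real.map_matrix_volume_pi_eq_smul_volume_pi ((isUnit_iff_isUnit_det P).1 hP).ne_zero
  rw [← ENNReal.toReal_ofReal (abs_nonneg P.det⁻¹), ← integral_smul_measure, ← hmap,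
    hemb.integral_map]
  rfl

theorem integral_gaussianWeight_ne_zero {M : Matrix ι ι ℂ} (hsymm : M.IsSymm)
    (hM : (M.map Complex.re).PosDef) : ∫ x, gaussianWeight M x ≠ 0 := by
  classical
  obtain ⟨P, d, hP, hdiag⟩ := exists_isUnit_transpose_mul_mul_eq_diagonal hsymm hM
  have hre (i : ι) : 0 < (1 + d i * Complex.I).re := by simp
  have hb (i : ι) : 1 + d i * Complex.I ≠ 0 := fun h => by simpa [h] using hre i
  have hprod := integral_comp_mulVec hP (gaussianWeight M)
  simp only [gaussianWeight_mulVec, hdiag] at hprod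
  rw [integral_gaussianWeight_diagonal hre] at hprod
  intro hzero
  rw [hzero, smul_zero] at hprod
  refine Finset.prod_ne_zero_iff.2 (fun i _ => ?_) hprod
  simp [Complex.cpow_eq_zero_iff, Real.pi_ne_zero, hb i]

end Weight

section Expectation

open Matrix

variable {ι E : Type*} [Fintype ι] [NormedAddCommGroup E] [NormedSpace ℂ E]

/-- The expectation `⟨F⟩ = Z⁻¹ ∫ F(x) e^{-(1/2) xᵀMx} dx`, where `Z = ∫ e^{-(1/2) xᵀMx} dx`. It is
the expected value only if `F` is integrable against the weight and `Z ≠ 0`; in the other cases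
it is `0`. -/
noncomputable def gaussianExpectation (M : Matrix ι ι ℂ) (F : (ι → ℝ) → E) : E :=
  (∫ x, gaussianWeight M x)⁻¹ • ∫ x, gaussianWeight M x • F x

theorem gaussianExpectation_eq_div (M : Matrix ι ι ℂ) (F : (ι → ℝ) → ℂ) :
    gaussianExpectation M F =
      (∫ x, F x * gaussianWeight M x) / ∫ x, gaussianWeight M x := by
  simp only [gaussianExpectation, smul_eq_mul, mul_comm, div_eq_mul_inv]

theorem gaussianExpectation_const [CompleteSpace E] {M : Matrix ι ι ℂ}
    (hZ : ∫ x, gaussianWeight M x ≠ 0) (a : E) : gaussianExpectation M (fun _ => a) = a := by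
  rw [gaussianExpectation, integral_smul_const, inv_smul_smul₀ hZ]

theorem gaussianExpectation_sum_smul {κ : Type*} (M : Matrix ι ι ℂ) (s : Finset κ) (c : κ → ℂ)
    {F : κ → (ι → ℝ) → E} (hF : ∀ k ∈ s, Integrable fun x => gaussianWeight M x • F k x) :
    gaussianExpectation M (fun x => ∑ k ∈ s, c k • F k x) =
      ∑ k ∈ s, c k • gaussianExpectation M (F k) := by
  simp only [gaussianExpectation, Finset.smul_sum, smul_comm _ (c _)]
  rw [integral_finsetSum s fun k hk => (hF k hk).fun_smul (c k), Finset.smul_sum]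
  exact Finset.sum_congr rfl fun k _ => by rw [integral_smul, smul_comm]

theorem hasLineDerivAt_gaussianWeight {M : Matrix ι ι ℂ} (hsymm : M.IsSymm) (x v : ι → ℝ) :
    HasLineDerivAt ℝ (gaussianWeight M)
      (-(gaussianWeight M x * (Complex.ofReal ∘ v ⬝ᵥ M *ᵥ (Complex.ofReal ∘ x)))) x v := by
  set X : ι → ℂ := Complex.ofReal ∘ x with hX
  set V : ι → ℂ := Complex.ofReal ∘ v with hV
  have hcross : X ⬝ᵥ M *ᵥ V = V ⬝ᵥ M *ᵥ X := by
    rw [dotProduct_mulVec, dotProduct_comm, ← mulVec_transpose, hsymm]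
  have hline (t : ℝ) : gaussianWeight M (x + t • v) = Complex.exp (-(1 / 2) *
      (X ⬝ᵥ M *ᵥ X + 2 * t * (V ⬝ᵥ M *ᵥ X) + (t : ℂ) ^ 2 * (V ⬝ᵥ M *ᵥ V))) := by
    have : Complex.ofReal ∘ (x + t • v) = X + (t : ℂ) • V := by
      ext i
      simp [hX, hV]
    rw [gaussianWeight, this]
    simp only [mulVec_add, mulVec_smul, dotProduct_add, add_dotProduct, smul_dotProduct,
      dotProduct_smul, smul_eq_mul, hcross]
    ring_nf
  have ht : HasDerivAt (fun t : ℝ => (t : ℂ)) 1 0 := Complex.ofRealCLM.hasDerivAt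
  have hexp := (((ht.const_mul 2).mul_const (V ⬝ᵥ M *ᵥ X)).const_add (X ⬝ᵥ M *ᵥ X)).add
    ((ht.pow 2).mul_const (V ⬝ᵥ M *ᵥ V)) |>.const_mul (-(1 / 2)) |>.cexp
  rw [HasLineDerivAt]
  simp only [hline]
  refine hexp.congr_deriv ?_
  rw [gaussianWeight, ← hX]
  simp

theorem gaussianExpectation_dotProduct_mulVec_smul {M : Matrix ι ι ℂ} (hsymm : M.IsSymm)
    {f f' : (ι → ℝ) → E} {v : ι → ℝ} (hderiv : ∀ x, HasLineDerivAt ℝ f (f' x) x v)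
    (hf : Integrable fun x => gaussianWeight M x • f x)
    (hf' : Integrable fun x => gaussianWeight M x • f' x)
    (hMf : Integrable fun x =>
      gaussianWeight M x • (Complex.ofReal ∘ v ⬝ᵥ M *ᵥ (Complex.ofReal ∘ x)) • f x) :
    gaussianExpectation M (fun x => (Complex.ofReal ∘ v ⬝ᵥ M *ᵥ (Complex.ofReal ∘ x)) • f x) =
      gaussianExpectation M f' := by
  have hparts := integral_bilinear_hasLineDerivAt_right_eq_neg_left_of_integrable
    (B := (ContinuousLinearMap.lsmul ℝ ℂ : ℂ →L[ℝ] E →L[ℝ] E))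
    (f := gaussianWeight M) (g := f) (μ := volume) (v := v)
    (by simpa only [ContinuousLinearMap.lsmul_apply, neg_smul, mul_smul] using hMf.fun_neg)
    hf' hf (fun x _ => hasLineDerivAt_gaussianWeight hsymm x v) (fun x _ => hderiv x)
  simp only [ContinuousLinearMap.lsmul_apply, neg_smul, mul_smul, integral_neg, neg_neg] at hparts
  rw [gaussianExpectation, gaussianExpectation, hparts]

variable [DecidableEq ι]

theorem sum_smul_gaussianExpectation_coord_smul {M : Matrix ι ι ℂ} (hsymm : M.IsSymm)
    {f f' : (ι → ℝ) → E} {j : ι} (hderiv : ∀ x, HasLineDerivAt ℝ f (f' x) x (Pi.single j 1))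
    (hf : Integrable fun x => gaussianWeight M x • f x)
    (hf' : Integrable fun x => gaussianWeight M x • f' x)
    (hxf : ∀ k, Integrable fun x => gaussianWeight M x • (x k : ℂ) • f x) :
    ∑ k, M j k • gaussianExpectation M (fun x => (x k : ℂ) • f x) = gaussianExpectation M f' := by
  have hrow (x : ι → ℝ) : (Complex.ofReal ∘ Pi.single j 1 ⬝ᵥ M *ᵥ (Complex.ofReal ∘ x)) • f x =
      ∑ k, M j k • (x k : ℂ) • f x := by
    have : Complex.ofReal ∘ Pi.single j 1 = Pi.single j (1 : ℂ) := by
      ext i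
      by_cases h : i = j <;> simp [h]
    rw [this, single_one_dotProduct, mulVec, dotProduct, Finset.sum_smul]
    simp only [Function.comp_apply, mul_smul]
  have hsum : Integrable fun x => gaussianWeight M x • ∑ k, M j k • (x k : ℂ) • f x := by
    simp only [Finset.smul_sum, smul_comm _ (M j _)]
    exact integrable_finsetSum _ fun k _ => (hxf k).smul (M j k)
  rw [← gaussianExpectation_sum_smul M _ _ fun k _ => hxf k]
  simp only [← hrow] at hsum ⊢
  exact gaussianExpectation_dotProduct_mulVec_smul hsymm hderiv hf hf' hsum

theorem mul_gaussianExpectation_coord_mul_coord {M : Matrix ι ι ℂ} (hsymm : M.IsSymm)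
    (hM : (M.map Complex.re).PosDef) :
    M * of (fun i j => gaussianExpectation M fun x => ((x i * x j : ℝ) : ℂ)) = 1 := by
  ext i j
  have hgrowth : HasPolynomialGrowth fun x : ι → ℝ => (x j : ℂ) := by
    simpa using (HasPolynomialGrowth.const (1 : ℂ)).coord_smul j
  have hcont (k : ι) : Continuous fun x : ι → ℝ => (x k : ℂ) := by fun_prop
  have hderiv (x : ι → ℝ) : HasLineDerivAt ℝ (fun x : ι → ℝ => (x j : ℂ))
      ((1 : Matrix ι ι ℂ) i j) x (Pi.single i 1) := by
    have := (Complex.ofRealCLM.comp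
      (ContinuousLinearMap.proj j : (ι → ℝ) →L[ℝ] ℝ)).hasFDerivAt (x := x)
    convert! this.hasLineDerivAt (Pi.single i 1) using 1
    simp [one_apply, Pi.single_apply, eq_comm, apply_ite Complex.ofReal]
  have hstein := sum_smul_gaussianExpectation_coord_smul hsymm hderiv
    (hgrowth.integrable_gaussianWeight_smul hM (hcont j).aestronglyMeasurable)
    ((HasPolynomialGrowth.const _).integrable_gaussianWeight_smul hM aestronglyMeasurable_const)
    (fun k => (hgrowth.coord_smul k).integrable_gaussianWeight_smul hM
      ((hcont k).smul (hcont j)).aestronglyMeasurable)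
  rw [gaussianExpectation_const (integral_gaussianWeight_ne_zero hsymm hM)] at hstein
  simpa only [mul_apply, of_apply, Complex.ofReal_mul, smul_eq_mul] using hstein

theorem eq_sum_nonsing_inv_smul {R N : Type*} [CommRing R] [AddCommGroup N] [Module R N]
    {A : Matrix ι ι R} (hA : IsUnit A.det) {y z : ι → N} (h : ∀ j, ∑ k, A j k • y k = z j)
    (i : ι) : y i = ∑ j, A⁻¹ i j • z j := by
  calc y i = ∑ k, (A⁻¹ * A) i k • y k := by simp [nonsing_inv_mul A hA, one_apply]
    _ = ∑ k, ∑ j, (A⁻¹ i j * A j k) • y k := by simp only [mul_apply, Finset.sum_smul]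
    _ = ∑ j, ∑ k, (A⁻¹ i j * A j k) • y k := Finset.sum_comm
    _ = ∑ j, A⁻¹ i j • z j := by simp only [mul_smul, ← Finset.smul_sum, h]

theorem gaussian_wick_general [CompleteSpace E] (M : Matrix ι ι ℂ) (hsymm : M.IsSymm)
    (hM : (M.map Complex.re).PosDef) :
    Integrable (gaussianWeight M) ∧
    ∫ x, gaussianWeight M x ≠ 0 ∧
    IsUnit M.det ∧
    (∀ i j, gaussianExpectation M (fun x => ((x i * x j : ℝ) : ℂ)) = M⁻¹ i j) ∧
    (∀ (f : (ι → ℝ) → E) (f' : ι → (ι → ℝ) → E),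
      (∀ j x, HasLineDerivAt ℝ f (f' j x) x (Pi.single j 1)) →
      (Integrable fun x => gaussianWeight M x • f x) →
      (∀ j, Integrable fun x => gaussianWeight M x • f' j x) →
      (∀ k, Integrable fun x => gaussianWeight M x • (x k : ℂ) • f x) →
      ∀ i, gaussianExpectation M (fun x => (x i : ℂ) • f x) =
        ∑ j, M⁻¹ i j • gaussianExpectation M (f' j)) := by
  have hcov := mul_gaussianExpectation_coord_mul_coord hsymm hM
  have hdet : IsUnit M.det := isUnit_det_of_right_inverse hcov
  refine ⟨?_, integral_gaussianWeight_ne_zero hsymm hM, hdet, fun i j => ?_,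
    fun f f' hderiv hf hf' hxf => eq_sum_nonsing_inv_smul hdet fun j =>
      sum_smul_gaussianExpectation_coord_smul hsymm (hderiv j) hf (hf' j) hxf⟩
  · simpa using (HasPolynomialGrowth.const (1 : ℂ)).integrable_gaussianWeight_smul hM
      aestronglyMeasurable_const
  · rw [inv_eq_right_inv hcov, of_apply]

end Expectation

theorem gaussianWeight_eq_cexp_quadForm {m : ℕ} (M : Matrix (Fin m) (Fin m) ℂ) (x : Fin m → ℝ) :
    gaussianWeight M x = Complex.exp (-(1 / 2 : ℂ) * quadForm m M x) := by
  rw [gaussianWeight, quadForm]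
  simp only [dotProduct, Matrix.mulVec, Function.comp_apply, Finset.mul_sum]
  congr 1
  exact Finset.sum_congr rfl fun i _ => Finset.sum_congr rfl fun j _ => by ring

/-- for a complex symmetric matrix `M` with positive definite real part,
the Gaussian integral `Z = ∫ e^{−(1/2)xᵀMx}dx` converges absolutely and is nonzero, `M` is
invertible, the covariances are `⟨x_i x_j⟩ = (M⁻¹)_{ij}`, and the Gaussian integration-by-parts
(Wick) identity `⟨x_i f⟩ = ∑_j (M⁻¹)_{ij} ⟨∂f/∂x_j⟩` holds for every `C¹` function `f` of at
most polynomial growth together with its first-order partial derivatives. -/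
theorem gaussian_wick (m : ℕ) (hm : 1 ≤ m) (M : Matrix (Fin m) (Fin m) ℂ)
    (hsym : M.transpose = M)
    (hpos : (Matrix.of fun i j : Fin m => (M i j).re).PosDef) :
    Integrable (fun x : Fin m → ℝ => Complex.exp (-(1/2 : ℂ) * quadForm m M x)) ∧
    (∫ x : Fin m → ℝ, Complex.exp (-(1/2 : ℂ) * quadForm m M x)) ≠ 0 ∧
    IsUnit M.det ∧
    (∀ i j : Fin m,
      (∫ x : Fin m → ℝ, ((x i * x j : ℝ) : ℂ) * Complex.exp (-(1/2 : ℂ) * quadForm m M x)) /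
          (∫ x : Fin m → ℝ, Complex.exp (-(1/2 : ℂ) * quadForm m M x))
        = M⁻¹ i j) ∧
    (∀ f : (Fin m → ℝ) → ℂ, ContDiff ℝ 1 f →
      (∃ C : ℝ, ∃ k : ℕ, ∀ x : Fin m → ℝ, ‖f x‖ ≤ C * (1 + ‖x‖)^k) →
      (∃ C : ℝ, ∃ k : ℕ, ∀ x : Fin m → ℝ, ‖fderiv ℝ f x‖ ≤ C * (1 + ‖x‖)^k) →
      ∀ i : Fin m,
        (∫ x : Fin m → ℝ, ((x i : ℝ) : ℂ) * f x * Complex.exp (-(1/2 : ℂ) * quadForm m M x)) /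
            (∫ x : Fin m → ℝ, Complex.exp (-(1/2 : ℂ) * quadForm m M x))
          = ∑ j : Fin m, M⁻¹ i j *
              ((∫ x : Fin m → ℝ,
                  fderiv ℝ f x (Pi.single j 1) * Complex.exp (-(1/2 : ℂ) * quadForm m M x)) /
                (∫ x : Fin m → ℝ, Complex.exp (-(1/2 : ℂ) * quadForm m M x)))) := by
  obtain ⟨hint, hZ, hdet, hcov, hwick⟩ := gaussian_wick_general (E := ℂ) M hsym hpos
  simp only [← gaussianWeight_eq_cexp_quadForm, ← gaussianExpectation_eq_div]
  refine ⟨hint, hZ, hdet, hcov, fun f hf (hgrowth : HasPolynomialGrowth f)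
    (hgrowth' : HasPolynomialGrowth (fderiv ℝ f)) => ?_⟩
  have hcont : Continuous f := hf.continuous
  exact hwick f _ (fun j x => (hf.differentiable one_ne_zero x).hasFDerivAt.hasLineDerivAt _)
    (hgrowth.integrable_gaussianWeight_smul hpos hcont.aestronglyMeasurable)
    (fun j => (hgrowth'.clm_apply _).integrable_gaussianWeight_smul hpos
      ((hf.continuous_fderiv one_ne_zero).clm_apply continuous_const).aestronglyMeasurable)
    (fun k => (hgrowth.coord_smul k).integrable_gaussianWeight_smul hpos (by fun_prop))
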